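/- Let z ∈ C_0([0,T]) and let t ∈ [0,T) be a point at which A⁺[z] jumps to the right, i.e., lim_{δ↓0} A⁺[z](t+δ) > A⁺[z](t). Then A⁺[z](t+δ) > t for every δ ∈ (0, T−t]. -/

import Mathlib

/-!
If `A⁺[z](t+δ) ≤ t`, then the maximum over `[0,t+δ]` is already attained on `[0,t]`, so `M⁺[z]` is
constant on `[t,t+δ]`. Hence `A⁺[z](t)` is also a maximiser of `z` over `[0,s]` for every
`s ∈ (t,t+δ]`, so `A⁺[z](s) ≤ A⁺[z](t)` there, and the right limit at `t` is at most `A⁺[z](t)`: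
there is no jump. The only analytic input is that the extrema defining `M⁺` and `A⁺` are attained,
by compactness (`Aplus_mem`).
-/

open Set Filter Topology

/-- Running maximum `M⁺[z](t) = max_{s ∈ [0,t]} z(s)`. -/
noncomputable def Mplus (z : ℝ → ℝ) (t : ℝ) : ℝ := sSup (z '' Set.Icc 0 t)

/-- Running minimum `M⁻[z](t) = min_{s ∈ [0,t]} z(s)`. -/
noncomputable def Mminus (z : ℝ → ℝ) (t : ℝ) : ℝ := sInf (z '' Set.Icc 0 t)

/-- `A⁺[z](t) = min {s ∈ [0,t] | z(s) = M⁺[z](t)}`. -/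
noncomputable def Aplus (z : ℝ → ℝ) (t : ℝ) : ℝ :=
  sInf {s | s ∈ Set.Icc 0 t ∧ z s = Mplus z t}

/-- `A⁻[z](t) = min {s ∈ [0,t] | z(s) = M⁻[z](t)}`. -/
noncomputable def Aminus (z : ℝ → ℝ) (t : ℝ) : ℝ :=
  sInf {s | s ∈ Set.Icc 0 t ∧ z s = Mminus z t}

/-- `Ā⁺[z](t) = lim_{δ↓0} A⁺[z](t+δ)` for `t < T` (the right limit of the nondecreasing
function `A⁺[z]`, which equals the infimum over `s ∈ (t,T]`), and `Ā⁺[z](T) = A⁺[z](T)`. -/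
noncomputable def Abarplus (T : ℝ) (z : ℝ → ℝ) (t : ℝ) : ℝ :=
  if t < T then sInf (Aplus z '' Set.Ioc t T) else Aplus z T

/-- `Ā⁻[z](t) = lim_{δ↓0} A⁻[z](t+δ)` for `t < T`, and `Ā⁻[z](T) = A⁻[z](T)`. -/
noncomputable def Abarminus (T : ℝ) (z : ℝ → ℝ) (t : ℝ) : ℝ :=
  if t < T then sInf (Aminus z '' Set.Ioc t T) else Aminus z T

theorem le_Mplus {T : ℝ} {z : ℝ → ℝ} (hz : ContinuousOn z (Set.Icc 0 T)) {t s : ℝ}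
    (htT : t ≤ T) (hs : s ∈ Set.Icc 0 t) : z s ≤ Mplus z t :=
  le_csSup (isCompact_Icc.image_of_continuousOn
    (hz.mono (Set.Icc_subset_Icc_right htT))).bddAbove (Set.mem_image_of_mem z hs)

/-- The infimum defining `A⁺[z](t)` is a minimum: `A⁺[z](t)` lies in `[0,t]` and maximises `z`
there. -/
theorem Aplus_mem {T : ℝ} {z : ℝ → ℝ} (hz : ContinuousOn z (Set.Icc 0 T)) {t : ℝ}
    (ht : t ∈ Set.Icc 0 T) : Aplus z t ∈ Set.Icc 0 t ∧ z (Aplus z t) = Mplus z t := by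
  have hzt : ContinuousOn z (Set.Icc 0 t) := hz.mono (Set.Icc_subset_Icc_right ht.2)
  have hne : (Set.Icc 0 t).Nonempty := Set.nonempty_Icc.2 ht.1
  have hclosed : IsClosed {s | s ∈ Set.Icc 0 t ∧ z s = Mplus z t} :=
    hzt.preimage_isClosed_of_isClosed isClosed_Icc (isClosed_singleton (x := Mplus z t))
  have hattained : {s | s ∈ Set.Icc 0 t ∧ z s = Mplus z t}.Nonempty := by
    obtain ⟨s, hs, hsM⟩ := (isCompact_Icc.image_of_continuousOn hzt).sSup_mem (hne.image z)
    exact ⟨s, hs, hsM⟩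
  exact hclosed.csInf_mem hattained ⟨0, fun s hs => hs.1.1⟩

theorem Aplus_le {z : ℝ → ℝ} {t s : ℝ} (hs : s ∈ Set.Icc 0 t) (hsM : z s = Mplus z t) :
    Aplus z t ≤ s :=
  csInf_le ⟨0, fun _ hr => hr.1.1⟩ ⟨hs, hsM⟩

/-- Let `z ∈ C_0([0,T])` and let `t ∈ [0,T)` be a point at which `A⁺[z]` jumps
to the right, i.e. the right limit `L = lim_{δ↓0} A⁺[z](t+δ)` satisfies `L > A⁺[z](t)`.
Then `A⁺[z](t+δ) > t` for every `δ ∈ (0, T−t]`. -/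
theorem stmt_6 (T : ℝ) (hT : 0 < T) (z : ℝ → ℝ)
    (hz : ContinuousOn z (Set.Icc 0 T)) (hz0 : z 0 = 0)
    (t : ℝ) (ht : t ∈ Set.Ico (0 : ℝ) T) (L : ℝ)
    (hL : Filter.Tendsto (Aplus z) (𝓝[>] t) (𝓝 L)) (hjump : Aplus z t < L) :
    ∀ δ ∈ Set.Ioc (0 : ℝ) (T - t), t < Aplus z (t + δ) := by
  rintro δ ⟨hδ, hδT⟩
  obtain ⟨ht0, htT⟩ := ht
  by_contra! hle
  obtain ⟨hAt, hzAt⟩ := Aplus_mem hz (t := t) ⟨ht0, htT.le⟩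
  obtain ⟨hAδ, hzAδ⟩ := Aplus_mem hz (t := t + δ) ⟨by linarith, by linarith⟩
  have hMδ : Mplus z (t + δ) ≤ Mplus z t := hzAδ ▸ le_Mplus hz htT.le ⟨hAδ.1, hle⟩
  refine hjump.not_ge (le_of_tendsto hL ?_)
  filter_upwards [Ioc_mem_nhdsGT (show t < t + δ by linarith)] with s hs
  obtain ⟨hAs, hzAs⟩ := Aplus_mem hz (t := s) ⟨by linarith [hs.1], by linarith [hs.2]⟩
  have hAts : Aplus z t ∈ Set.Icc 0 s := ⟨hAt.1, hAt.2.trans hs.1.le⟩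
  have hMs : Mplus z s ≤ Mplus z (t + δ) :=
    hzAs ▸ le_Mplus hz (by linarith) ⟨hAs.1, hAs.2.trans hs.2⟩
  have hMt : Mplus z t ≤ Mplus z s := hzAt ▸ le_Mplus hz (by linarith [hs.2]) hAts
  exact Aplus_le hAts (by linarith)
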